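/- arXiv:2101.03984 — 2 statements merged into one kernel-verified Lean document; each statement's English description precedes it below -/
import Mathlib

section
/- Let U ⊂ ℝ⁸ be a Cayley subspace, i.e. a 4-dimensional subspace admitting an orthonormal basis (u₀,u₁,u₂,u₃) with Φ(u₀,u₁,u₂,u₃) = 1; orient U by this basis and identify Λ²U* = {α ∈ Λ²(ℝ⁸)* : i(v)α = 0 for all v ∈ U^⊥}. Then a 2-form α ∈ Λ²U* is anti-self-dual on U (with respect to the induced metric and this orientation) if and only if π²₇(α) = 0. -/
open scoped BigOperators

noncomputable section

namespace FMpaper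

variable {K : Type*} [NormedField K] [NormedAlgebra ℝ K]

/-- Coefficient model for the exterior algebra of `(ℝⁿ)*` with scalars in `K`:
a form is given by its coefficients on the basis `e^S`, `S ⊆ {0, …, n-1}` sorted. -/
abbrev Form (K : Type*) (n : ℕ) := Finset (Fin n) → K

variable {n : ℕ}

/-- Sign such that `e^s ∧ e^t = signMerge s t • e^(s ∪ t)` for disjoint sorted `s, t`. -/
def signMerge (s t : Finset (Fin n)) : K :=
  (-1 : K) ^ (((s ×ˢ t).filter (fun p => p.2 < p.1)).card)

/-- Wedge product. -/
def wedge (α β : Form K n) : Form K n :=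
  fun u => ∑ s ∈ u.powerset, signMerge s (u \ s) * α s * β (u \ s)

/-- Hodge star operator (for the standard inner product and orientation `e^{0⋯(n-1)}`). -/
def hstar (α : Form K n) : Form K n :=
  fun t => signMerge tᶜ t * α tᶜ

/-- Interior product with the basis vector `e_μ`. -/
def iprodB (μ : Fin n) (α : Form K n) : Form K n :=
  fun t => if μ ∈ t then 0
    else (-1 : K) ^ ((t.filter (fun j => j < μ)).card) * α (insert μ t)

/-- Interior product with the vector `v`. -/
def iprod (v : Fin n → K) (α : Form K n) : Form K n :=
  fun t => ∑ μ, v μ * iprodB μ α t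

/-- The basis covector `e^i` as a 1-form. -/
def e1 (i : Fin n) : Form K n := fun s => if s = {i} then 1 else 0

/-- The covector `v♭` dual to a vector `v`. -/
def flat (v : Fin n → K) : Form K n := ∑ i, v i • e1 i

/-- The vector `α♯` dual to a 1-form `α`. -/
def sharp1 (α : Form K n) : Fin n → K := fun i => α {i}

/-- The inner product of forms (extended `K`-bilinearly). -/
def inner' (α β : Form K n) : K := ∑ s, α s * β s

/-- The (Euclidean) norm of a form; for an `√-1 ℝ`-valued form `√-1 γ` this is `‖γ‖`. -/
def fnorm (α : Form K n) : ℝ := Real.sqrt (∑ s, ‖α s‖ ^ 2)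

/-- `α` is homogeneous of degree `k`. -/
def isGrade (k : ℕ) (α : Form K n) : Prop := ∀ s, s.card ≠ k → α s = 0

/-- Evaluation of a `k`-form on `k` vectors. -/
def evalForm {k : ℕ} (α : Form K n) (v : Fin k → (Fin n → K)) : K :=
  ∑ s : Finset (Fin n), α s *
    (if h : s.card = k then
      Matrix.det (Matrix.of fun i j => v i ((s.orderIsoOfFin h j : Fin n))) else 0)

/-- The matrix of the skew-symmetric endomorphism `γ♯` associated with a 2-form `γ`
via `⟨γ♯ u, v⟩ = γ(u, v)`. -/
def mat2 (γ : Form K n) : Matrix (Fin n) (Fin n) K :=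
  Matrix.of fun i j => if i < j then γ {i, j} else if j < i then - γ {i, j} else 0

/-- The standard `G₂` 3-form `φ = e^{123}+e^{145}+e^{167}+e^{246}−e^{257}−e^{347}−e^{356}`
on `ℝ⁷` (indices `1, …, 7` shifted to `0, …, 6`). -/
def phi7 : Form K 7 := fun s =>
  if s = ({0, 1, 2} : Finset (Fin 7)) then 1
  else if s = ({0, 3, 4} : Finset (Fin 7)) then 1
  else if s = ({0, 5, 6} : Finset (Fin 7)) then 1
  else if s = ({1, 3, 5} : Finset (Fin 7)) then 1
  else if s = ({1, 4, 6} : Finset (Fin 7)) then -1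
  else if s = ({2, 3, 6} : Finset (Fin 7)) then -1
  else if s = ({2, 4, 5} : Finset (Fin 7)) then -1
  else 0

/-- `*₇φ = e^{4567}+e^{2367}+e^{2345}+e^{1357}−e^{1346}−e^{1256}−e^{1247}` on `ℝ⁷`. -/
def psi7 : Form K 7 := fun s =>
  if s = ({3, 4, 5, 6} : Finset (Fin 7)) then 1
  else if s = ({1, 2, 5, 6} : Finset (Fin 7)) then 1
  else if s = ({1, 2, 3, 4} : Finset (Fin 7)) then 1
  else if s = ({0, 2, 4, 6} : Finset (Fin 7)) then 1
  else if s = ({0, 2, 3, 5} : Finset (Fin 7)) then -1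
  else if s = ({0, 1, 4, 5} : Finset (Fin 7)) then -1
  else if s = ({0, 1, 3, 6} : Finset (Fin 7)) then -1
  else 0

/-- The `G₂` 3-form `φ` on `V = span{e₁, …, e₇} ⊂ ℝ⁸`, regarded as a form on `ℝ⁸`
annihilated by `i(e₀)` (indices `1, …, 7` of `ℝ⁸`). -/
def phi8 : Form K 8 := fun s =>
  if s = ({1, 2, 3} : Finset (Fin 8)) then 1
  else if s = ({1, 4, 5} : Finset (Fin 8)) then 1
  else if s = ({1, 6, 7} : Finset (Fin 8)) then 1
  else if s = ({2, 4, 6} : Finset (Fin 8)) then 1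
  else if s = ({2, 5, 7} : Finset (Fin 8)) then -1
  else if s = ({3, 4, 7} : Finset (Fin 8)) then -1
  else if s = ({3, 5, 6} : Finset (Fin 8)) then -1
  else 0

/-- `*₇φ` on `V ⊂ ℝ⁸`, regarded as a 4-form on `ℝ⁸` annihilated by `i(e₀)`. -/
def psi8 : Form K 8 := fun s =>
  if s = ({4, 5, 6, 7} : Finset (Fin 8)) then 1
  else if s = ({2, 3, 6, 7} : Finset (Fin 8)) then 1
  else if s = ({2, 3, 4, 5} : Finset (Fin 8)) then 1
  else if s = ({1, 3, 5, 7} : Finset (Fin 8)) then 1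
  else if s = ({1, 3, 4, 6} : Finset (Fin 8)) then -1
  else if s = ({1, 2, 5, 6} : Finset (Fin 8)) then -1
  else if s = ({1, 2, 4, 7} : Finset (Fin 8)) then -1
  else 0

/-- The standard Cayley 4-form `Φ = e⁰ ∧ φ + *₇φ` on `ℝ⁸`. -/
def Phi8 : Form K 8 := wedge (e1 0) phi8 + psi8

/-- The index set of `V = span{e₁, …, e₇} ⊂ ℝ⁸`. -/
def Vset : Finset (Fin 8) := {1, 2, 3, 4, 5, 6, 7}

/-- The Hodge star `*₇` of `V ⊂ ℝ⁸` (volume form `e^{1⋯7}`), acting on forms on `ℝ⁸`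
annihilated by `i(e₀)`. -/
def star7 (α : Form K 8) : Form K 8 :=
  fun t => if (0 : Fin 8) ∈ t then 0 else signMerge (Vset \ t) t * α (Vset \ t)

/-- `α` is (the pullback of) a form on `V`, i.e. `i(e₀) α = 0`. -/
def onV (α : Form K 8) : Prop := ∀ s, (0 : Fin 8) ∈ s → α s = 0

/-- `λ²(α) = ½ (e⁰ ∧ α + i(α♯) φ)` for `α ∈ V*`. -/
def lambda2 (α : Form K 8) : Form K 8 :=
  (2 : K)⁻¹ • (wedge (e1 0) α + iprod (sharp1 α) phi8)

/-- `λ⁴(α) = (1/√8) (e⁰ ∧ i(α♯) *₇φ − α ∧ φ)` for `α ∈ V*`. -/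
def lambda4 (α : Form K 8) : Form K 8 :=
  (algebraMap ℝ K (Real.sqrt 8))⁻¹ • (wedge (e1 0) (iprod (sharp1 α) psi8) - wedge α phi8)

/-- `λ⁶(α) = *₈ λ²(α)` for `α ∈ V*`. -/
def lambda6 (α : Form K 8) : Form K 8 := hstar (lambda2 α)

/-- The projection `π²₇(α) = (α + *₈(Φ ∧ α))/4` onto `Λ²₇`. -/
def pi27 (α : Form K 8) : Form K 8 := (4 : K)⁻¹ • (α + hstar (wedge Phi8 α))

/-- The projection `π⁴₇(β) = Σ_{μ=1}^{7} ⟨β, λ⁴(e^μ)⟩ λ⁴(e^μ)` onto `Λ⁴₇`. -/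
def pi47 (β : Form K 8) : Form K 8 :=
  ∑ μ : Fin 7, inner' β (lambda4 (e1 μ.succ)) • lambda4 (e1 μ.succ)

/-- `τ(u₀,u₁,u₂,u₃) = Σ_{μ=1}^{7} λ⁴(e^μ)(u₀,u₁,u₂,u₃) ⬝ λ⁴(e^μ) = π⁴₇(u₀♭∧u₁♭∧u₂♭∧u₃♭)`. -/
def tau4 (u : Fin 4 → (Fin 8 → K)) : Form K 8 :=
  ∑ μ : Fin 7, evalForm (lambda4 (e1 μ.succ)) u • lambda4 (e1 μ.succ)

/-- Partial derivative `∂f^a/∂x^j` at `x`. -/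
def pd {m p : ℕ} (f : (Fin m → ℝ) → (Fin p → ℝ)) (x : Fin m → ℝ) (j : Fin m) (a : Fin p) : ℝ :=
  fderiv ℝ f x (Pi.single j 1) a


/-!
Let `α ⌟ β` denote contraction. In general `*(β ∧ α) = α ⌟ *β`, and `*Φ = Φ`, so
`π²₇(α) = (α + α ⌟ Φ)/4`. For `α ∈ Λ²U*` the restriction of `α ⌟ Φ` to `U` is `Φ(u₀,u₁,u₂,u₃)`
times the Hodge dual of `α` on `U`, so on a Cayley subspace `π²₇(α)` restricts to `(α + *α)/4`. On
the other hand `π²₇(α) = ∑ ⟨α, λ²(e^μ)⟩ λ²(e^μ)`, so `⟨α, π²₇(α)⟩` is a sum of squares and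
`π²₇(α)` vanishes iff `⟨α, π²₇(α)⟩` does. As `α ∈ Λ²U*`, this number can be computed on `U`, where
it is `1/4` times the sum of the squares of the three components of `α + *α`.
-/

section SignMerge

variable {𝕜 : Type*} [NormedField 𝕜] {s t : Finset (Fin n)} {μ : Fin n}

@[simp]
lemma signMerge_empty_right (s : Finset (Fin n)) : signMerge s ∅ = (1 : 𝕜) := by
  simp [signMerge]

lemma signMerge_mul_self (s t : Finset (Fin n)) : signMerge s t * signMerge s t = (1 : 𝕜) := by
  rw [signMerge, ← mul_pow, neg_one_mul, neg_neg, one_pow]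

lemma signMerge_union_left (h : Disjoint s t) (r : Finset (Fin n)) :
    signMerge (s ∪ t) r = (signMerge s r * signMerge t r : 𝕜) := by
  rw [signMerge, Finset.union_product, Finset.filter_union, Finset.card_union_of_disjoint, pow_add]
  · rfl
  · exact Finset.disjoint_filter_filter (Finset.disjoint_product.2 (.inl h))

lemma signMerge_union_right (h : Disjoint s t) (r : Finset (Fin n)) :
    signMerge r (s ∪ t) = (signMerge r s * signMerge r t : 𝕜) := by
  rw [signMerge, Finset.product_union, Finset.filter_union, Finset.card_union_of_disjoint, pow_add]
  · rfl
  · exact Finset.disjoint_filter_filter (Finset.disjoint_product.2 (.inr h))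

lemma signMerge_insert_right (h : μ ∉ t) (r : Finset (Fin n)) :
    signMerge r (insert μ t) = (signMerge r {μ} * signMerge r t : 𝕜) := by
  rw [Finset.insert_eq, signMerge_union_right (Finset.disjoint_singleton_left.2 h)]

lemma signMerge_comm (h : Disjoint s t) :
    signMerge s t = ((-1) ^ (s.card * t.card) * signMerge t s : 𝕜) := by
  have hswap : ((t ×ˢ s).filter fun p => p.2 < p.1).card
      = ((s ×ˢ t).filter fun p => ¬ p.2 < p.1).card := by
    refine Finset.card_equiv (Equiv.prodComm _ _) fun p => ?_
    simp only [Finset.mem_filter, Finset.mem_product, Equiv.prodComm_apply, Prod.fst_swap,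
      Prod.snd_swap, not_lt, and_comm (a := p.1 ∈ t)]
    refine and_congr_right fun hp => ⟨le_of_lt, fun hle => lt_of_le_of_ne hle ?_⟩
    exact fun heq => Finset.disjoint_left.1 h hp.1 (heq ▸ hp.2)
  have hcard : s.card * t.card = ((s ×ˢ t).filter fun p => p.2 < p.1).card
      + ((t ×ˢ s).filter fun p => p.2 < p.1).card := by
    rw [hswap, Finset.card_filter_add_card_filter_not, Finset.card_product]
  rw [hcard, pow_add, mul_assoc]
  exact (mul_one _).symm.trans (congrArg _ (signMerge_mul_self t s).symm)

lemma signMerge_singleton_left (μ : Fin n) (t : Finset (Fin n)) :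
    signMerge {μ} t = ((-1) ^ (t.filter (· < μ)).card : 𝕜) := by
  rw [signMerge, Finset.singleton_product, Finset.filter_map, Finset.card_map]
  rfl

end SignMerge

lemma sum_sum_erase {ι R : Type*} [Fintype ι] [DecidableEq ι] [AddCommMonoid R]
    (F : ι → Finset ι → R) : ∑ s, ∑ i ∈ s, F i (s.erase i) = ∑ t, ∑ i ∈ tᶜ, F i t := by
  rw [Finset.sum_sigma', Finset.sum_sigma']
  refine Finset.sum_bij' (fun p _ => ⟨p.1.erase p.2, p.2⟩) (fun p _ => ⟨insert p.2 p.1, p.2⟩)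
    ?_ ?_ ?_ ?_ ?_ <;> simp +contextual [Finset.insert_erase]

section InnerProduct

variable {𝕜 : Type*} [NormedField 𝕜] {ι : Type*} [Fintype ι]

lemma inner'_comm (α β : Form 𝕜 n) : inner' α β = inner' β α :=
  dotProduct_comm α β

lemma inner'_sum_smul_right (α : Form 𝕜 n) (c : ι → 𝕜) (β : ι → Form 𝕜 n) :
    inner' α (∑ i, c i • β i) = ∑ i, c i * inner' α (β i) := by
  simp only [inner', Finset.sum_apply, Pi.smul_apply, smul_eq_mul, Finset.mul_sum]
  rw [Finset.sum_comm]
  simp only [mul_left_comm]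

lemma inner'_sum_smul_left (c : ι → 𝕜) (α : ι → Form 𝕜 n) (β : Form 𝕜 n) :
    inner' (∑ i, c i • α i) β = ∑ i, c i * inner' (α i) β := by
  simp only [inner'_comm _ β, inner'_sum_smul_right]

end InnerProduct

section InteriorProduct

variable {𝕜 : Type*} [NormedField 𝕜] {α β : Form 𝕜 n} {t : Finset (Fin n)} {μ : Fin n} {k : ℕ}

lemma iprodB_apply_of_mem (h : μ ∈ t) (α : Form 𝕜 n) : iprodB μ α t = 0 :=
  if_pos h

lemma iprodB_apply_of_notMem (h : μ ∉ t) (α : Form 𝕜 n) :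
    iprodB μ α t = signMerge {μ} t * α (insert μ t) := by
  rw [iprodB, if_neg h, signMerge_singleton_left]

lemma iprodB_comm (μ ν : Fin n) (α : Form 𝕜 n) :
    iprodB μ (iprodB ν α) = -iprodB ν (iprodB μ α) := by
  funext t
  rw [Pi.neg_apply]
  by_cases hμ : μ ∈ t
  · by_cases hν : ν ∈ t
    · rw [iprodB_apply_of_mem hμ, iprodB_apply_of_mem hν, neg_zero]
    · rw [iprodB_apply_of_mem hμ, iprodB_apply_of_notMem hν,
        iprodB_apply_of_mem (Finset.mem_insert_of_mem hμ), mul_zero, neg_zero]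
  by_cases hν : ν ∈ t
  · rw [iprodB_apply_of_mem hν, iprodB_apply_of_notMem hμ,
      iprodB_apply_of_mem (Finset.mem_insert_of_mem hν), mul_zero, neg_zero]
  rw [iprodB_apply_of_notMem hμ, iprodB_apply_of_notMem hν]
  rcases eq_or_ne μ ν with rfl | hμν
  · rw [iprodB_apply_of_mem (Finset.mem_insert_self _ _), mul_zero, neg_zero]
  rw [iprodB_apply_of_notMem (by simp [hμν.symm, hν]), iprodB_apply_of_notMem (by simp [hμν, hμ]),
    signMerge_insert_right hμ, signMerge_insert_right hν, Finset.insert_comm,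
    signMerge_comm (Finset.disjoint_singleton.2 hμν)]
  simp only [Finset.card_singleton, mul_one, pow_one]
  ring

lemma iprod_eq_sum (v : Fin n → 𝕜) (α : Form 𝕜 n) : iprod v α = ∑ μ, v μ • iprodB μ α := by
  funext t
  simp [iprod]

lemma iprod_sub (v w : Fin n → 𝕜) (α : Form 𝕜 n) :
    iprod (v - w) α = iprod v α - iprod w α := by
  simp only [iprod_eq_sum, Pi.sub_apply, sub_smul, Finset.sum_sub_distrib]

lemma iprod_smul_sum {ι : Type*} [Fintype ι] (c : ι → 𝕜) (u : ι → Fin n → 𝕜) (α : Form 𝕜 n) :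
    iprod (∑ i, c i • u i) α = ∑ i, c i • iprod (u i) α := by
  simp only [iprod_eq_sum, Finset.sum_apply, Pi.smul_apply, smul_eq_mul, Finset.sum_smul,
    Finset.smul_sum, smul_smul]
  exact Finset.sum_comm

lemma iprod_single (μ : Fin n) (α : Form 𝕜 n) : iprod (Pi.single μ 1) α = iprodB μ α := by
  simp [iprod_eq_sum, Pi.single_apply]

lemma iprod_zero (v : Fin n → 𝕜) : iprod v (0 : Form 𝕜 n) = 0 := by
  funext t
  simp [iprod, iprodB]

lemma iprodB_sum {ι : Type*} (μ : Fin n) (S : Finset ι) (f : ι → Form 𝕜 n) :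
    iprodB μ (∑ i ∈ S, f i) = ∑ i ∈ S, iprodB μ (f i) := by
  funext t
  by_cases h : μ ∈ t <;>
    simp [iprodB_apply_of_mem, iprodB_apply_of_notMem, h, Finset.mul_sum]

lemma iprodB_smul (μ : Fin n) (c : 𝕜) (α : Form 𝕜 n) : iprodB μ (c • α) = c • iprodB μ α := by
  funext t
  by_cases h : μ ∈ t <;>
    simp [iprodB_apply_of_mem, iprodB_apply_of_notMem, h, mul_left_comm]

lemma iprod_comm (v w : Fin n → 𝕜) (α : Form 𝕜 n) :
    iprod v (iprod w α) = -iprod w (iprod v α) := by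
  simp only [iprod_eq_sum, iprodB_sum, iprodB_smul, Finset.smul_sum]
  rw [Finset.sum_comm]
  simp only [← Finset.sum_neg_distrib]
  refine Finset.sum_congr rfl fun ν _ => Finset.sum_congr rfl fun μ _ => ?_
  rw [iprodB_comm, smul_neg, smul_neg, smul_comm]

protected lemma isGrade.iprod (hα : isGrade (k + 1) α) (v : Fin n → 𝕜) : isGrade k (iprod v α) := by
  intro t ht
  refine Finset.sum_eq_zero fun μ _ => ?_
  by_cases h : μ ∈ t
  · rw [iprodB_apply_of_mem h, mul_zero]
  · rw [iprodB_apply_of_notMem h, hα _ (by rw [Finset.card_insert_of_notMem h]; omega), mul_zero,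
      mul_zero]

lemma sum_inner'_iprodB (α : Form 𝕜 n) (hβ : isGrade k β) :
    ∑ μ, inner' (iprodB μ α) (iprodB μ β) = k * inner' α β := by
  have hterm : ∀ μ t, iprodB μ α t * iprodB μ β t
      = if μ ∈ tᶜ then α (insert μ t) * β (insert μ t) else 0 := by
    intro μ t
    by_cases h : μ ∈ t
    · simp [iprodB_apply_of_mem h, h]
    · rw [iprodB_apply_of_notMem h, iprodB_apply_of_notMem h, mul_mul_mul_comm, signMerge_mul_self,
        one_mul, if_pos (Finset.mem_compl.2 h)]
  calc ∑ μ, inner' (iprodB μ α) (iprodB μ β)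
      = ∑ t, ∑ μ ∈ tᶜ, α (insert μ t) * β (insert μ t) := by
        simp only [inner', hterm]
        rw [Finset.sum_comm]
        simp only [Finset.sum_ite_mem, Finset.univ_inter]
    _ = ∑ s, ∑ _μ ∈ s, α s * β s := by
        rw [← sum_sum_erase fun μ t => α (insert μ t) * β (insert μ t)]
        refine Finset.sum_congr rfl fun s _ => Finset.sum_congr rfl fun _ hμ => ?_
        rw [Finset.insert_erase hμ]
    _ = k * inner' α β := by
        rw [inner', Finset.mul_sum]
        refine Finset.sum_congr rfl fun s _ => ?_
        rw [Finset.sum_const, nsmul_eq_mul]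
        by_cases hs : s.card = k
        · rw [hs]
        · rw [hβ s hs, mul_zero, mul_zero, mul_zero]

end InteriorProduct

section Enumeration

variable {ι : Type*} [LinearOrder ι] {s : Finset ι} {k : ℕ}

lemma orderEmbOfFin_erase (hs : s.card = k + 1) (j : Fin (k + 1))
    (hs' : (s.erase (s.orderEmbOfFin hs j)).card = k) :
    s.orderEmbOfFin hs ∘ j.succAbove = (s.erase (s.orderEmbOfFin hs j)).orderEmbOfFin hs' := by
  refine Finset.orderEmbOfFin_unique hs' (fun i => ?_)
    ((s.orderEmbOfFin hs).strictMono.comp (Fin.strictMono_succAbove j))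
  simp [Fin.succAbove_ne]

lemma card_filter_lt_orderEmbOfFin (hs : s.card = k) (j : Fin k) :
    ((s.erase (s.orderEmbOfFin hs j)).filter (· < s.orderEmbOfFin hs j)).card = j := by
  rw [← Fin.card_Iio j, ← Finset.card_map (s.orderEmbOfFin hs).toEmbedding]
  congr 1
  ext x
  simp only [Finset.mem_filter, Finset.mem_erase, Finset.mem_map, Finset.mem_Iio,
    RelEmbedding.coe_toEmbedding]
  constructor
  · rintro ⟨⟨-, hx⟩, hlt⟩
    obtain ⟨i, rfl⟩ : x ∈ Set.range (s.orderEmbOfFin hs) := by simpa using hx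
    exact ⟨i, (s.orderEmbOfFin hs).lt_iff_lt.1 hlt, rfl⟩
  · rintro ⟨i, hi, rfl⟩
    have hlt := (s.orderEmbOfFin hs).strictMono hi
    exact ⟨⟨hlt.ne, s.orderEmbOfFin_mem hs i⟩, hlt⟩

end Enumeration

section Evaluation

variable {𝕜 : Type*} [NormedField 𝕜] {k : ℕ}

/-- The value `e^s(v₁, …, v_k)` of the basis form `e^s` on `k` vectors, a minor of the matrix with
rows `v₁, …, v_k`. It is `0` if `s` does not have `k` elements. -/
def minor (s : Finset (Fin n)) (v : Fin k → Fin n → 𝕜) : 𝕜 :=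
  if h : s.card = k then (Matrix.of fun i j => v i (s.orderIsoOfFin h j : Fin n)).det else 0

lemma evalForm_eq_sum_minor (α : Form 𝕜 n) (v : Fin k → Fin n → 𝕜) :
    evalForm α v = ∑ s, α s * minor s v :=
  rfl

lemma minor_vecCons (s : Finset (Fin n)) (v : Fin n → 𝕜) (w : Fin k → Fin n → 𝕜) :
    minor s (Matrix.vecCons v w)
      = ∑ μ ∈ s, v μ * (signMerge {μ} (s.erase μ) * minor (s.erase μ) w) := by
  by_cases hs : s.card = k + 1
  · have hreindex : ∀ F : Fin n → 𝕜, ∑ μ ∈ s, F μ = ∑ j, F (s.orderEmbOfFin hs j) := fun F => by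
      rw [← Finset.sum_coe_sort]
      exact ((s.orderIsoOfFin hs).toEquiv.sum_comp fun μ => F μ).symm
    rw [hreindex, minor, dif_pos hs, Matrix.det_succ_row_zero]
    refine Finset.sum_congr rfl fun j _ => ?_
    have hs' : (s.erase (s.orderEmbOfFin hs j)).card = k := by
      rw [Finset.card_erase_of_mem (s.orderEmbOfFin_mem hs j), hs, Nat.add_sub_cancel]
    have hminor : minor (s.erase (s.orderEmbOfFin hs j)) w
        = (Matrix.of fun i l => w i (s.orderEmbOfFin hs (j.succAbove l))).det := by
      rw [minor, dif_pos hs']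
      simp only [Finset.coe_orderIsoOfFin_apply, ← orderEmbOfFin_erase hs j hs',
        Function.comp_apply]
    simp only [Finset.coe_orderIsoOfFin_apply, signMerge_singleton_left,
      hminor, card_filter_lt_orderEmbOfFin, Matrix.of_apply, Matrix.cons_val_zero]
    rw [mul_left_comm, ← mul_assoc]
    rfl
  · rw [minor, dif_neg hs, Finset.sum_eq_zero]
    intro μ hμ
    have hs' : (s.erase μ).card ≠ k := by
      have := Finset.card_erase_add_one hμ
      omega
    rw [minor, dif_neg hs', mul_zero, mul_zero]

lemma evalForm_vecCons (α : Form 𝕜 n) (v : Fin n → 𝕜) (w : Fin k → Fin n → 𝕜) :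
    evalForm α (Matrix.vecCons v w) = evalForm (iprod v α) w := by
  have hterm : ∀ μ t, v μ * iprodB μ α t
      = if μ ∈ tᶜ then v μ * (signMerge {μ} t * α (insert μ t)) else 0 := by
    intro μ t
    by_cases h : μ ∈ t
    · simp [iprodB_apply_of_mem h, h]
    · rw [iprodB_apply_of_notMem h, if_pos (Finset.mem_compl.2 h)]
  simp only [evalForm_eq_sum_minor, iprod, hterm, Finset.sum_ite_mem, Finset.univ_inter,
    Finset.sum_mul, minor_vecCons, Finset.mul_sum]
  rw [← sum_sum_erase fun μ t => v μ * (signMerge {μ} t * α (insert μ t)) * minor t w]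
  refine Finset.sum_congr rfl fun s _ => Finset.sum_congr rfl fun μ hμ => ?_
  rw [Finset.insert_erase hμ]
  ring

lemma evalForm_fin_zero (α : Form 𝕜 n) (v : Fin 0 → Fin n → 𝕜) : evalForm α v = α ∅ := by
  simp [evalForm]

lemma evalForm_add (α β : Form 𝕜 n) (v : Fin k → Fin n → 𝕜) :
    evalForm (α + β) v = evalForm α v + evalForm β v := by
  simp only [evalForm_eq_sum_minor, Pi.add_apply, add_mul, Finset.sum_add_distrib]

lemma evalForm_smul (c : 𝕜) (α : Form 𝕜 n) (v : Fin k → Fin n → 𝕜) :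
    evalForm (c • α) v = c * evalForm α v := by
  simp only [evalForm_eq_sum_minor, Pi.smul_apply, smul_eq_mul, mul_assoc, Finset.mul_sum]

lemma evalForm_comp_perm (α : Form 𝕜 n) (v : Fin k → Fin n → 𝕜) (σ : Equiv.Perm (Fin k)) :
    evalForm α (v ∘ σ) = (σ.sign : ℤ) * evalForm α v := by
  simp only [evalForm_eq_sum_minor, Finset.mul_sum]
  refine Finset.sum_congr rfl fun s _ => ?_
  rw [mul_left_comm]
  congr 1
  unfold minor
  split_ifs with hs
  · exact Matrix.det_permute σ (Matrix.of fun i j => v i (s.orderIsoOfFin hs j))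
  · rw [mul_zero]

lemma evalForm_eq_zero_of_eq (α : Form 𝕜 n) {v : Fin k → Fin n → 𝕜} {i j : Fin k} (hv : v i = v j)
    (hij : i ≠ j) : evalForm α v = 0 := by
  refine Finset.sum_eq_zero fun s _ => mul_eq_zero_of_right _ ?_
  split_ifs with hs
  · exact Matrix.det_zero_of_row_eq hij (by funext l; simp [hv])
  · rfl

lemma evalForm_swap (α : Form 𝕜 n) (x y : Fin n → 𝕜) :
    evalForm α ![y, x] = -evalForm α ![x, y] := by
  have hswap : ![y, x] = ![x, y] ∘ Equiv.swap 0 1 := by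
    funext i
    fin_cases i <;> rfl
  rw [hswap, evalForm_comp_perm, Equiv.Perm.sign_swap (by decide)]
  simp

end Evaluation

section Frame

variable {𝕜 : Type*} [NormedField 𝕜] {ι : Type*} {k : ℕ} {u : ι → Fin n → 𝕜} {α β : Form 𝕜 n}

/-- `β ∈ Λ^•U*` for `U` the span of the vectors `u i`: the form `β` is annihilated by the interior
product with every vector orthogonal to `U`. -/
def IsSupportedOn (u : ι → Fin n → 𝕜) (β : Form 𝕜 n) : Prop :=
  ∀ v : Fin n → 𝕜, (∀ i, ∑ k, v k * u i k = 0) → iprod v β = 0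

/-- The vectors `u i` form an orthonormal system, for the bilinear extension of the standard inner
product when `𝕜` is not `ℝ`. -/
def IsOrthonormal [DecidableEq ι] (u : ι → Fin n → 𝕜) : Prop :=
  ∀ i j, ∑ k, u i k * u j k = if i = j then (1 : 𝕜) else 0

protected lemma IsSupportedOn.iprod (hβ : IsSupportedOn u β) (w : Fin n → 𝕜) :
    IsSupportedOn u (iprod w β) := by
  intro v hv
  rw [iprod_comm, hβ v hv, iprod_zero, neg_zero]

lemma IsSupportedOn.comp_perm (hβ : IsSupportedOn u β) (σ : Equiv.Perm ι) :
    IsSupportedOn (u ∘ σ) β :=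
  fun v hv => hβ v fun i => by simpa using hv (σ.symm i)

variable [DecidableEq ι]

lemma IsOrthonormal.comp_perm (hu : IsOrthonormal u) (σ : Equiv.Perm ι) :
    IsOrthonormal (u ∘ σ) := fun i j => by
  simp only [Function.comp_apply, hu _ _, σ.injective.eq_iff]

variable [Fintype ι]

lemma IsSupportedOn.iprodB_eq_sum (hβ : IsSupportedOn u β) (hu : IsOrthonormal u) (μ : Fin n) :
    iprodB μ β = ∑ i, u i μ • iprod (u i) β := by
  rw [← iprod_smul_sum, ← iprod_single, ← sub_eq_zero, ← iprod_sub]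
  refine hβ _ fun j => ?_
  have hproj : ∑ k, (∑ i, u i μ • u i) k * u j k = u j μ := by
    simp only [Finset.sum_apply, Pi.smul_apply, smul_eq_mul, Finset.sum_mul, mul_assoc]
    rw [Finset.sum_comm]
    simp only [← Finset.mul_sum, hu _ j, mul_ite, mul_one, mul_zero, Finset.sum_ite_eq',
      Finset.mem_univ, if_true]
  simp only [Pi.sub_apply, sub_mul, Finset.sum_sub_distrib, hproj]
  simp [Pi.single_apply]

lemma IsSupportedOn.sum_inner'_iprod (hβ : IsSupportedOn u β) (hu : IsOrthonormal u)
    (hk : isGrade k β) (α : Form 𝕜 n) :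
    ∑ i, inner' (iprod (u i) α) (iprod (u i) β) = k * inner' α β := by
  rw [← sum_inner'_iprodB α hk]
  simp only [hβ.iprodB_eq_sum hu, iprod_eq_sum (α := α), inner'_sum_smul_left,
    inner'_sum_smul_right]
  exact Finset.sum_comm

/-- The factor `k!` appears because every increasing `k`-tuple of basis vectors is counted once for
each of its orderings. -/
lemma IsSupportedOn.sum_evalForm_mul_evalForm (hβ : IsSupportedOn u β) (hu : IsOrthonormal u)
    (hk : isGrade k β) (α : Form 𝕜 n) :
    ∑ f : Fin k → ι, evalForm α (u ∘ f) * evalForm β (u ∘ f) = k.factorial * inner' α β := by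
  induction k generalizing α β with
  | zero =>
    have hinner : inner' α β = α ∅ * β ∅ :=
      Finset.sum_eq_single ∅ (fun s _ hs => by rw [hk s (by simpa using hs), mul_zero]) (by simp)
    simp [evalForm_fin_zero, hinner]
  | succ k ih =>
    rw [← (Fin.consEquiv fun _ => ι).sum_comp, Fintype.sum_prod_type]
    have hcons : ∀ i (f : Fin k → ι), u ∘ Fin.consEquiv (fun _ => ι) (i, f)
        = Matrix.vecCons (u i) (u ∘ f) := fun i f => Fin.comp_cons u i f
    simp only [hcons, evalForm_vecCons]
    simp only [ih (hβ.iprod _) (hk.iprod _), ← Finset.mul_sum]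
    rw [hβ.sum_inner'_iprod hu hk, Nat.factorial_succ]
    push_cast
    ring

end Frame

section Contraction

variable {𝕜 : Type*} [NormedField 𝕜] {k : ℕ} {α β : Form 𝕜 n}

/-- The contraction `α ⌟ β`, for which `e^s ⌟ e^(s ∪ t) = ± e^t`. The sign makes `e^s ⌟ (e^s ∧ e^t)`
equal to `e^t` (for disjoint `s` and `t`). -/
def contract (α β : Form 𝕜 n) : Form 𝕜 n :=
  fun t => ∑ r with Disjoint r t, signMerge r t * (α r * β (r ∪ t))

lemma contract_empty (α β : Form 𝕜 n) : contract α β ∅ = inner' α β := by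
  simp [contract, inner']

lemma hstar_wedge (α β : Form 𝕜 n) : hstar (wedge β α) = contract α (hstar β) := by
  funext t
  rw [hstar, wedge, contract, Finset.mul_sum]
  refine Finset.sum_nbij' (fun s => tᶜ \ s) (fun r => tᶜ \ r)
    (fun s _ => by simp [← Finset.subset_compl_iff_disjoint_right])
    (fun r _ => Finset.mem_powerset.2 Finset.sdiff_subset)
    (fun s hs => by simpa using hs)
    (fun r hr => by simpa [Finset.subset_compl_iff_disjoint_right] using hr) fun s hs => ?_
  obtain ⟨r, hr, rfl⟩ : ∃ r ⊆ tᶜ, s = tᶜ \ r := ⟨tᶜ \ s, Finset.sdiff_subset,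
    (Finset.sdiff_sdiff_eq_self (Finset.mem_powerset.1 hs)).symm⟩
  have hcompl : (r ∪ t)ᶜ = tᶜ \ r := by
    rw [Finset.compl_union, Finset.inter_comm, Finset.sdiff_eq_inter_compl]
  have hsplit : signMerge tᶜ t = (signMerge (tᶜ \ r) t * signMerge r t : 𝕜) := by
    rw [← signMerge_union_left Finset.sdiff_disjoint, Finset.sdiff_union_of_subset hr]
  rw [Finset.sdiff_sdiff_eq_self hr, hstar, hcompl, hsplit,
    signMerge_union_right (disjoint_compl_right.mono_right hr).symm]
  ring

lemma iprodB_contract (hα : isGrade k α) (μ : Fin n) (β : Form 𝕜 n) :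
    iprodB μ (contract α β) = (-1 : 𝕜) ^ k • contract α (iprodB μ β) := by
  funext t
  rw [Pi.smul_apply, smul_eq_mul]
  by_cases hμ : μ ∈ t
  · rw [iprodB_apply_of_mem hμ, contract, Finset.sum_eq_zero, mul_zero]
    intro r _
    rw [iprodB_apply_of_mem (Finset.mem_union_right r hμ), mul_zero, mul_zero]
  rw [iprodB_apply_of_notMem hμ, contract, contract, Finset.mul_sum, Finset.mul_sum]
  refine Finset.sum_subset_zero_on_sdiff ?_ ?_ ?_
  · exact Finset.monotone_filter_right _ fun r _ =>
      Disjoint.mono_right (Finset.subset_insert μ t)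
  · intro r hr
    have hμr : μ ∈ r := by
      simp only [Finset.mem_sdiff, Finset.mem_filter_univ, Finset.disjoint_insert_right] at hr
      tauto
    rw [iprodB_apply_of_mem (Finset.mem_union_left t hμr), mul_zero, mul_zero, mul_zero]
  · intro r hr
    obtain ⟨hμr, hrt⟩ := Finset.disjoint_insert_right.1 ((Finset.mem_filter_univ r).1 hr)
    rcases ne_or_eq r.card k with hk | rfl
    · simp only [hα r hk, zero_mul, mul_zero]
    rw [iprodB_apply_of_notMem (by simp [hμr, hμ]), signMerge_union_right hrt,
      signMerge_insert_right hμ, signMerge_comm (Finset.disjoint_singleton_right.2 hμr),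
      Finset.union_insert, Finset.card_singleton, mul_one]
    ring

lemma contract_smul (c : 𝕜) (α β : Form 𝕜 n) : contract α (c • β) = c • contract α β := by
  funext t
  simp only [contract, Pi.smul_apply, smul_eq_mul, Finset.mul_sum, mul_left_comm]

lemma contract_sum {ι : Type*} (α : Form 𝕜 n) (S : Finset ι) (f : ι → Form 𝕜 n) :
    contract α (∑ i ∈ S, f i) = ∑ i ∈ S, contract α (f i) := by
  funext t
  simp only [contract, Finset.sum_apply, Finset.mul_sum]
  exact Finset.sum_comm

lemma iprod_contract (hα : isGrade k α) (v : Fin n → 𝕜) (β : Form 𝕜 n) :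
    iprod v (contract α β) = (-1 : 𝕜) ^ k • contract α (iprod v β) := by
  simp only [iprod_eq_sum, contract_sum, contract_smul, iprodB_contract hα, Finset.smul_sum,
    smul_comm (v _)]

protected lemma isGrade.contract {l : ℕ} (hα : isGrade k α) (hβ : isGrade (k + l) β) :
    isGrade l (contract α β) := by
  intro t ht
  refine Finset.sum_eq_zero fun r hr => ?_
  rcases ne_or_eq r.card k with hk | rfl
  · rw [hα r hk, zero_mul, mul_zero]
  · have hdisj : Disjoint r t := (Finset.mem_filter_univ r).1 hr
    rw [hβ _ (by rw [Finset.card_union_of_disjoint hdisj]; omega), mul_zero, mul_zero]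

end Contraction

section FourFrame

variable {𝕜 : Type*} [NormedField 𝕜] [CharZero 𝕜] {u : Fin 4 → Fin n → 𝕜} {β : Form 𝕜 n}

lemma IsSupportedOn.inner'_eq_sum_pairs (hβ : IsSupportedOn u β) (hu : IsOrthonormal u)
    (hgrade : isGrade 2 β) (α : Form 𝕜 n) :
    inner' α β = evalForm α ![u 0, u 1] * evalForm β ![u 0, u 1]
      + evalForm α ![u 2, u 3] * evalForm β ![u 2, u 3]
      + evalForm α ![u 0, u 2] * evalForm β ![u 0, u 2]
      + evalForm α ![u 3, u 1] * evalForm β ![u 3, u 1]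
      + evalForm α ![u 0, u 3] * evalForm β ![u 0, u 3]
      + evalForm α ![u 1, u 2] * evalForm β ![u 1, u 2] := by
  have hdiag : ∀ i, evalForm α ![u i, u i] = 0 := fun i =>
    evalForm_eq_zero_of_eq α (i := 0) (j := 1) rfl (by decide)
  have hsum : ∑ i, ∑ j, evalForm α ![u i, u j] * evalForm β ![u i, u j] = 2 * inner' α β := by
    have hcomp : ∀ i j, u ∘ ![i, j] = ![u i, u j] := fun i j => by
      funext l
      fin_cases l <;> rfl
    rw [← Nat.cast_two, ← Nat.factorial_two, ← hβ.sum_evalForm_mul_evalForm hu hgrade α,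
      ← (finTwoArrowEquiv (Fin 4)).symm.sum_comp, Fintype.sum_prod_type]
    simp only [finTwoArrowEquiv_symm_apply, hcomp]
  refine mul_left_cancel₀ (two_ne_zero' 𝕜) (hsum.symm.trans ?_)
  simp only [Fin.sum_univ_four, hdiag, evalForm_swap _ (u 0) (u 1), evalForm_swap _ (u 0) (u 2),
    evalForm_swap _ (u 0) (u 3), evalForm_swap _ (u 1) (u 2), evalForm_swap _ (u 3) (u 1),
    evalForm_swap _ (u 2) (u 3)]
  ring

lemma evalForm_contract_pair (hu : IsOrthonormal u) {α β : Form 𝕜 n} (hα : IsSupportedOn u α)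
    (hgrade : isGrade 2 α) :
    evalForm (contract α β) ![u 0, u 1] = evalForm β u * evalForm α ![u 2, u 3] := by
  have hcontract : ∀ v γ, iprod v (contract α γ) = contract α (iprod v γ) := fun v γ => by
    rw [iprod_contract hgrade, neg_one_sq, one_smul]
  have hcons : ∀ x y, evalForm (iprod (u 1) (iprod (u 0) β)) ![x, y]
      = evalForm β ![u 0, u 1, x, y] := fun x y => by
    rw [← evalForm_vecCons, ← evalForm_vecCons]
  have hzero : ∀ {v : Fin 4 → Fin n → 𝕜} (i j : Fin 4), v i = v j → i ≠ j → evalForm β v = 0 :=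
    fun i j => evalForm_eq_zero_of_eq β
  have hframe : ![u 0, u 1, u 2, u 3] = u := by
    funext i
    fin_cases i <;> rfl
  rw [evalForm_vecCons, evalForm_vecCons, evalForm_fin_zero, hcontract, hcontract, contract_empty,
    inner'_comm, hα.inner'_eq_sum_pairs hu hgrade]
  simp only [hcons, hframe]
  rw [hzero (v := ![u 0, u 1, u 0, u 1]) 0 2 rfl (by decide),
    hzero (v := ![u 0, u 1, u 0, u 2]) 0 2 rfl (by decide),
    hzero (v := ![u 0, u 1, u 3, u 1]) 1 3 rfl (by decide),
    hzero (v := ![u 0, u 1, u 0, u 3]) 0 2 rfl (by decide),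
    hzero (v := ![u 0, u 1, u 1, u 2]) 1 2 rfl (by decide)]
  ring

end FourFrame

section CayleyForm

variable {𝕜 : Type*} [NormedField 𝕜]

lemma wedge_e1_apply (μ : Fin n) (α : Form 𝕜 n) (s : Finset (Fin n)) :
    wedge (e1 μ) α s = if μ ∈ s then signMerge {μ} (s.erase μ) * α (s.erase μ) else 0 := by
  have hterm : ∀ r, signMerge r (s \ r) * e1 μ r * α (s \ r)
      = if r = {μ} then signMerge {μ} (s.erase μ) * α (s.erase μ) else 0 := by
    intro r
    unfold e1
    split_ifs with hr
    · rw [hr, mul_one, Finset.sdiff_singleton_eq_erase]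
    · rw [mul_zero, zero_mul]
  simp only [wedge, hterm, Finset.sum_ite_eq', Finset.mem_powerset, Finset.singleton_subset_iff]

lemma wedge_e1_zero_apply (α : Form 𝕜 8) (s : Finset (Fin 8)) :
    wedge (e1 0) α s = if 0 ∈ s then α (s.erase 0) else 0 := by
  simp [wedge_e1_apply, signMerge_singleton_left]

lemma Phi8_apply (s : Finset (Fin 8)) :
    Phi8 s = ((if 0 ∈ s then phi8 (s.erase 0) else 0) + psi8 s : 𝕜) := by
  rw [Phi8, Pi.add_apply, wedge_e1_zero_apply]

lemma lambda2_e1_apply (μ : Fin 8) (s : Finset (Fin 8)) :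
    lambda2 (e1 μ) s = (2⁻¹ * ((if 0 ∈ s then if s.erase 0 = {μ} then 1 else 0 else 0)
      + iprodB μ phi8 s) : 𝕜) := by
  have hsharp : sharp1 (e1 μ) = (Pi.single μ 1 : Fin 8 → 𝕜) := by
    funext ν
    simp [sharp1, e1, Pi.single_apply]
  rw [lambda2, Pi.smul_apply, Pi.add_apply, wedge_e1_zero_apply, hsharp, iprod_single]
  rfl

end CayleyForm

section RationalCoefficients

variable {𝕜 : Type*} [NormedField 𝕜]

/- Equality in `𝕜` is not decidable, so the finite verifications below are carried out with
coefficients in `ℚ` and then cast. -/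

lemma ratCast_signMerge (s t : Finset (Fin n)) : ((signMerge s t : ℚ) : 𝕜) = signMerge s t := by
  simp only [signMerge, Rat.cast_pow, Rat.cast_neg, Rat.cast_one]

lemma ratCast_phi8 (s : Finset (Fin 8)) : ((phi8 s : ℚ) : 𝕜) = phi8 s := by
  simp only [phi8, apply_ite (Rat.cast : ℚ → 𝕜), Rat.cast_one, Rat.cast_neg, Rat.cast_zero]

lemma ratCast_psi8 (s : Finset (Fin 8)) : ((psi8 s : ℚ) : 𝕜) = psi8 s := by
  simp only [psi8, apply_ite (Rat.cast : ℚ → 𝕜), Rat.cast_one, Rat.cast_neg, Rat.cast_zero]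

variable [CharZero 𝕜]

lemma ratCast_Phi8 (s : Finset (Fin 8)) : ((Phi8 s : ℚ) : 𝕜) = Phi8 s := by
  simp only [Phi8_apply, Rat.cast_add, apply_ite (Rat.cast : ℚ → 𝕜), Rat.cast_zero, ratCast_phi8,
    ratCast_psi8]

lemma ratCast_lambda2_e1 (μ : Fin 8) (s : Finset (Fin 8)) :
    ((lambda2 (e1 μ) s : ℚ) : 𝕜) = lambda2 (e1 μ) s := by
  simp only [lambda2_e1_apply, iprodB, Rat.cast_mul, Rat.cast_inv, Rat.cast_ofNat, Rat.cast_add,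
    apply_ite (Rat.cast : ℚ → 𝕜), Rat.cast_pow, Rat.cast_neg, Rat.cast_one, Rat.cast_zero,
    ratCast_phi8]

lemma hstar_Phi8 : hstar Phi8 = (Phi8 : Form 𝕜 8) := by
  have hrat : ∀ s, hstar Phi8 s = (Phi8 s : ℚ) := by
    simp only [hstar, Phi8_apply]
    decide +kernel
  funext s
  rw [← ratCast_Phi8 s, ← hrat s, hstar, hstar, Rat.cast_mul, ratCast_signMerge, ratCast_Phi8]

/-- The entries of the matrix of `α ↦ α + α ⌟ Φ` on 2-forms. -/
lemma ite_add_Phi8_eq_sum_lambda2 {s t : Finset (Fin 8)} (hs : s.card = 2) (ht : t.card = 2) :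
    ((if s = t then 1 else 0) + if Disjoint s t then signMerge s t * Phi8 (s ∪ t) else 0 : 𝕜)
      = 4 * ∑ μ : Fin 7, lambda2 (e1 μ.succ) s * lambda2 (e1 μ.succ) t := by
  have hrat : ∀ s ∈ Finset.univ.powersetCard 2, ∀ t ∈ Finset.univ.powersetCard 2,
      ((if s = t then 1 else 0) + if Disjoint s t then signMerge s t * Phi8 (s ∪ t) else 0 : ℚ)
        = 4 * ∑ μ : Fin 7, lambda2 (e1 μ.succ) s * lambda2 (e1 μ.succ) t := by
    simp only [lambda2_e1_apply, Phi8_apply]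
    decide +kernel
  have hcast := congrArg (Rat.cast : ℚ → 𝕜) (hrat s (Finset.mem_powersetCard_univ.2 hs) t
    (Finset.mem_powersetCard_univ.2 ht))
  simpa only [Rat.cast_add, Rat.cast_mul, Rat.cast_sum, apply_ite (Rat.cast : ℚ → 𝕜), Rat.cast_one,
    Rat.cast_zero, Rat.cast_ofNat, ratCast_signMerge, ratCast_Phi8, ratCast_lambda2_e1] using hcast

lemma isGrade_lambda2_e1 (μ : Fin 7) : isGrade 2 (lambda2 (e1 μ.succ) : Form 𝕜 8) := by
  have hrat : ∀ s : Finset (Fin 8), s.card ≠ 2 → (lambda2 (e1 μ.succ) s : ℚ) = 0 := by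
    simp only [lambda2_e1_apply]
    decide +kernel +revert
  intro s hs
  rw [← ratCast_lambda2_e1, hrat s hs, Rat.cast_zero]

lemma isGrade_Phi8 : isGrade 4 (Phi8 : Form 𝕜 8) := by
  have hrat : ∀ s : Finset (Fin 8), s.card ≠ 4 → (Phi8 s : ℚ) = 0 := by
    simp only [Phi8_apply]
    decide +kernel
  intro s hs
  rw [← ratCast_Phi8, hrat s hs, Rat.cast_zero]

end RationalCoefficients

section Projection

variable {𝕜 : Type*} [NormedField 𝕜] [CharZero 𝕜]

lemma pi27_eq_add_contract (α : Form 𝕜 8) :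
    pi27 α = (4 : 𝕜)⁻¹ • (α + contract α Phi8) := by
  rw [pi27, hstar_wedge, hstar_Phi8]

lemma pi27_eq_sum_lambda2 {α : Form 𝕜 8} (hα : isGrade 2 α) :
    pi27 α = ∑ μ : Fin 7, inner' α (lambda2 (e1 μ.succ)) • lambda2 (e1 μ.succ) := by
  rw [pi27_eq_add_contract, inv_smul_eq_iff₀ (by norm_num)]
  funext t
  by_cases ht : t.card = 2
  · have hsum : (α + contract α Phi8) t = ∑ s, α s * ((if s = t then 1 else 0)
        + if Disjoint s t then signMerge s t * Phi8 (s ∪ t) else 0) := by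
      simp only [Pi.add_apply, contract, mul_add, mul_ite, mul_one, mul_zero, mul_left_comm,
        Finset.sum_add_distrib, Finset.sum_ite_eq', Finset.mem_univ, if_true, Finset.sum_filter]
    have hpair : ∀ s, α s * ((if s = t then 1 else 0)
        + if Disjoint s t then signMerge s t * Phi8 (s ∪ t) else 0)
        = α s * (4 * ∑ μ : Fin 7, lambda2 (e1 μ.succ) s * lambda2 (e1 μ.succ) t) := fun s => by
      by_cases hs : s.card = 2
      · rw [ite_add_Phi8_eq_sum_lambda2 hs ht]
      · rw [hα s hs, zero_mul, zero_mul]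
    simp only [hsum, hpair, inner', Pi.smul_apply, Finset.sum_apply, smul_eq_mul, Finset.mul_sum,
      Finset.sum_mul]
    rw [Finset.sum_comm]
    refine Finset.sum_congr rfl fun μ _ => Finset.sum_congr rfl fun s _ => ?_
    ring
  · rw [Pi.add_apply, hα t ht, hα.contract (l := 2) isGrade_Phi8 t ht, Pi.smul_apply,
      Finset.sum_apply, Finset.sum_eq_zero fun μ _ => ?_, smul_zero, add_zero]
    rw [Pi.smul_apply, isGrade_lambda2_e1 μ t ht, smul_zero]

lemma inner'_pi27 {α : Form 𝕜 8} (hα : isGrade 2 α) :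
    inner' α (pi27 α) = ∑ μ : Fin 7, inner' α (lambda2 (e1 μ.succ)) ^ 2 := by
  simp only [pi27_eq_sum_lambda2 hα, inner'_sum_smul_right, sq]

lemma pi27_eq_zero_iff {α : Form ℝ 8} (hα : isGrade 2 α) :
    pi27 α = 0 ↔ inner' α (pi27 α) = 0 := by
  refine ⟨fun h => by simp [h, inner'], fun h => ?_⟩
  rw [inner'_pi27 hα, Finset.sum_eq_zero_iff_of_nonneg fun μ _ => sq_nonneg _] at h
  rw [pi27_eq_sum_lambda2 hα]
  exact Finset.sum_eq_zero fun μ hμ => by rw [pow_eq_zero_iff two_ne_zero |>.1 (h μ hμ), zero_smul]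

end Projection

section CayleyFrame

variable {𝕜 : Type*} [NormedField 𝕜] {u : Fin 4 → Fin 8 → 𝕜}

/-- `u` is a positively oriented orthonormal basis of a Cayley subspace, oriented by `Φ`. -/
structure IsCayleyFrame (u : Fin 4 → Fin 8 → 𝕜) : Prop where
  orthonormal : IsOrthonormal u
  evalForm_Phi8 : evalForm Phi8 u = 1

lemma IsCayleyFrame.comp_perm (hu : IsCayleyFrame u) {σ : Equiv.Perm (Fin 4)} (hσ : σ.sign = 1) :
    IsCayleyFrame (u ∘ σ) where
  orthonormal := hu.orthonormal.comp_perm σ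
  evalForm_Phi8 := by
    rw [evalForm_comp_perm, hσ, hu.evalForm_Phi8]
    simp

variable [CharZero 𝕜] {α : Form 𝕜 8}

lemma IsCayleyFrame.evalForm_pi27 (hu : IsCayleyFrame u) (hα : IsSupportedOn u α)
    (hgrade : isGrade 2 α) (i j k l : Fin 4)
    (heven : ∃ σ : Equiv.Perm (Fin 4), σ.sign = 1 ∧ ⇑σ = ![i, j, k, l]) :
    evalForm (pi27 α) ![u i, u j] = 4⁻¹ * (evalForm α ![u i, u j] + evalForm α ![u k, u l]) := by
  obtain ⟨σ, hσ, hσv⟩ := heven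
  have hcontract := evalForm_contract_pair (β := Phi8) (hu.orthonormal.comp_perm σ)
    (hα.comp_perm σ) hgrade
  rw [(hu.comp_perm hσ).evalForm_Phi8, one_mul, hσv] at hcontract
  rw [pi27_eq_add_contract, evalForm_smul, evalForm_add]
  exact congrArg (fun x => 4⁻¹ * (_ + x)) hcontract

lemma IsCayleyFrame.inner'_pi27 (hu : IsCayleyFrame u) (hα : IsSupportedOn u α)
    (hgrade : isGrade 2 α) :
    inner' α (pi27 α) = 4⁻¹ * ((evalForm α ![u 0, u 1] + evalForm α ![u 2, u 3]) ^ 2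
      + (evalForm α ![u 0, u 2] + evalForm α ![u 3, u 1]) ^ 2
      + (evalForm α ![u 0, u 3] + evalForm α ![u 1, u 2]) ^ 2) := by
  have hpi := hu.evalForm_pi27 hα hgrade
  rw [inner'_comm, hα.inner'_eq_sum_pairs hu.orthonormal hgrade, hpi 0 1 2 3 (by decide),
    hpi 2 3 0 1 (by decide), hpi 0 2 3 1 (by decide), hpi 3 1 0 2 (by decide),
    hpi 0 3 1 2 (by decide), hpi 1 2 0 3 (by decide)]
  ring

end CayleyFrame

lemma sq_add_sq_add_sq_eq_zero_iff {R : Type*} [Ring R] [LinearOrder R] [IsStrictOrderedRing R]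
    {a b c : R} : a ^ 2 + b ^ 2 + c ^ 2 = 0 ↔ a = 0 ∧ b = 0 ∧ c = 0 := by
  rw [add_eq_zero_iff_of_nonneg (by positivity) (by positivity),
    add_eq_zero_iff_of_nonneg (by positivity) (by positivity)]
  simp only [sq_eq_zero_iff, and_assoc]

/-- Lemma 5.8.  Let `U ⊂ ℝ⁸` be a Cayley subspace with positively
oriented orthonormal basis `(u₀,u₁,u₂,u₃)` (so `Φ(u₀,u₁,u₂,u₃) = 1`), and let
`α ∈ Λ²U* = {α : i(v)α = 0 for v ⊥ U}`.  Then `α` is anti-self-dual on `U` (with respect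
to the induced metric and this orientation) if and only if `π²₇(α) = 0`. -/
theorem statement12 (u : Fin 4 → (Fin 8 → ℝ))
    (hu : ∀ i j, (∑ k, u i k * u j k) = if i = j then (1 : ℝ) else 0)
    (hCayley : evalForm Phi8 u = 1)
    (α : Form ℝ 8) (h2 : isGrade 2 α)
    (hU : ∀ v : Fin 8 → ℝ, (∀ i, ∑ k, v k * u i k = 0) → iprod v α = 0) :
    (evalForm α ![u 0, u 1] + evalForm α ![u 2, u 3] = 0 ∧
     evalForm α ![u 0, u 2] + evalForm α ![u 3, u 1] = 0 ∧
     evalForm α ![u 0, u 3] + evalForm α ![u 1, u 2] = 0) ↔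
    pi27 α = 0 := by
  have hframe : IsCayleyFrame u := ⟨hu, hCayley⟩
  rw [pi27_eq_zero_iff h2, hframe.inner'_pi27 hU h2, mul_eq_zero_iff_left (by norm_num),
    sq_add_sq_add_sq_eq_zero_iff]

end FMpaper
end
end

section
/- Let B ⊂ ℝ⁴ be open and f = (f¹,f²,f³): B → ℝ³ smooth, with graph tangent vectors w_a(y) and Fourier–Mukai curvature F_∇^S as in the context. Then the following are equivalent: (1) φ(w_a(y), w_b(y), w_c(y)) = 0 for all 4 ≤ a < b < c ≤ 7 and every y ∈ B (i.e., the graph S is a coassociative submanifold with an appropriate orientation); (2) (F_∇^S)³/6 + F_∇^S ∧ *₇φ = 0 at every point of B; (3) (F_∇^S)³/6 + F_∇^S ∧ *₇φ = 0 and φ ∧ *₇((F_∇^S)²) = 0 at every point of B. -/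
open scoped BigOperators

noncomputable section

namespace FMpaper

variable {K : Type*} [NormedField K] [NormedAlgebra ℝ K]

variable {n : ℕ}

/-! Graph setting for associative `T³`-fibrations: `ℝ⁷ = ℝ⁴ × ℝ³` with coordinates
`(y⁴,…,y⁷,x¹,x²,x³)`, where `dx¹,dx²,dx³,dy⁴,…,dy⁷` is the dual basis `e¹,…,e⁷`. -/

/-- The index of the coordinate `x^j` (`j = 1,2,3` shifted to `0,1,2`) in `ℝ⁷`. -/
def xj (j : Fin 3) : Fin 7 := Fin.castAdd 4 j

/-- The index of the coordinate `y^a` (`a = 4,…,7` shifted to `0,…,3`) in `ℝ⁷`. -/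
def ya (a : Fin 4) : Fin 7 := a.addNat 3

/-- The spanning tangent vectors `w_a = ∂_a + Σ_j (∂f^j/∂y^a) ∂_j` of the graph of `f`. -/
def wC (f : (Fin 4 → ℝ) → (Fin 3 → ℝ)) (y : Fin 4 → ℝ) (a : Fin 4) : Fin 7 → ℝ :=
  Pi.single (ya a) 1 + ∑ j : Fin 3, pd f y a j • (Pi.single (xj j) 1 : Fin 7 → ℝ)

/-- The real 2-form `γ` with `F_∇^S = √-1 γ`, i.e. `γ = Σ_{j,a} (∂f^j/∂y^a) dy^a ∧ dx^j`. -/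
def gammaC (f : (Fin 4 → ℝ) → (Fin 3 → ℝ)) (y : Fin 4 → ℝ) : Form ℝ 7 :=
  ∑ j : Fin 3, ∑ a : Fin 4, pd f y a j • wedge (e1 (ya a)) (e1 (xj j))

/-- The `√-1 ℝ`-valued curvature 2-form
`F_∇^S = √-1 Σ_{j,a} (∂f^j/∂y^a) dy^a ∧ dx^j` of the real Fourier–Mukai transform. -/
def FSC (f : (Fin 4 → ℝ) → (Fin 3 → ℝ)) (y : Fin 4 → ℝ) : Form ℂ 7 :=
  fun s => Complex.I * (gammaC f y s : ℂ)

/-!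
For a graph with Jacobian matrix `A`, everything is controlled by the single vector
`D = fueter A + rowCross A ∈ ℝ⁴`, a linear term plus the cubic term of signed `3 × 3` minors of `A`.
Up to sign, its components are the values of `φ` on the triples of tangent vectors. In
`F³/6 + F ∧ *₇φ` the first summand gives the minors and the second one the linear term; since
`√-1³ = -√-1`, the relative sign is the same as in `D`, and the components are `± √-1 D_d`.
The components of `φ ∧ *₇(F²)` are `± 2 ⟨A_j, fueter A⟩` for the rows `A_j` of `A`. A row is
orthogonal to the vector of minors (Laplace expansion with a repeated row), so they equal
`± 2 ⟨A_j, D⟩` and vanish with `D`. The other components of both 6-forms are zero for reasons of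
degree and of parity under `x ↦ -x`.
-/

variable {R : Type*} {𝕜 : Type*} [NormedField 𝕜]

section Weight

variable [Semiring R] {M : Type*}

/-- The forms that are homogeneous of weight `m` for the grading of the exterior algebra in which
`e^i` has weight `w i`. -/
def weightSpace [AddCommMonoid M] (w : Fin n → M) (m : M) : Submodule R (Form R n) where
  carrier := {α | ∀ s, ∑ i ∈ s, w i ≠ m → α s = 0}
  add_mem' hα hβ s hs := by simp only [Pi.add_apply, hα s hs, hβ s hs, add_zero]
  zero_mem' _ _ := rfl
  smul_mem' c α hα s hs := by simp only [Pi.smul_apply, hα s hs, smul_zero]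

lemma single_mem_weightSpace [AddCommMonoid M] (w : Fin n → M) (s : Finset (Fin n)) (c : R) :
    (Pi.single s c : Form R n) ∈ weightSpace w (∑ i ∈ s, w i) :=
  fun _ ht => Pi.single_eq_of_ne (M := fun _ => R) (ne_of_apply_ne (fun u => ∑ i ∈ u, w i) ht) c

lemma eq_zero_iff_of_mem_weightSpace [AddCommMonoid M] {w : Fin n → M} {m : M} {ι : Type*}
    {s : ι → Finset (Fin n)} (hs : ∀ u, ∑ i ∈ u, w i = m → ∃ i, u = s i) {α : Form R n}
    (hα : α ∈ weightSpace w m) : α = 0 ↔ ∀ i, α (s i) = 0 := by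
  refine ⟨fun h i => by rw [h, Pi.zero_apply], fun h => funext fun u => ?_⟩
  by_cases hu : ∑ i ∈ u, w i = m
  · obtain ⟨i, rfl⟩ := hs u hu
    exact h i
  · exact hα u hu

lemma wedge_mem_weightSpace [AddCommMonoid M] {w : Fin n → M} {p q : M} {α β : Form 𝕜 n}
    (hα : α ∈ weightSpace w p) (hβ : β ∈ weightSpace w q) :
    wedge α β ∈ weightSpace w (p + q) := by
  intro u hu
  refine Finset.sum_eq_zero fun s hs => ?_
  by_cases hp : ∑ i ∈ s, w i = p
  · have hq : ∑ i ∈ u \ s, w i ≠ q := by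
      rintro rfl
      rw [← hp, add_comm, Finset.sum_sdiff (Finset.mem_powerset.mp hs)] at hu
      exact hu rfl
    rw [hβ _ hq, mul_zero]
  · rw [hα _ hp, mul_zero, zero_mul]

lemma hstar_mem_weightSpace [AddCommGroup M] {w : Fin n → M} {m : M} {α : Form 𝕜 n}
    (hα : α ∈ weightSpace w m) :
    hstar α ∈ weightSpace w (∑ i, w i - m) := by
  intro t ht
  have hm : ∑ i ∈ tᶜ, w i ≠ m := by
    rintro rfl
    exact ht (eq_sub_of_add_eq (Finset.sum_add_sum_compl t w))
  rw [hstar, hα _ hm, mul_zero]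

end Weight

section Wedge

lemma signMerge_eq_ite (s t : Finset (Fin n)) :
    (signMerge s t : 𝕜) = if Even ((s ×ˢ t).filter fun p => p.2 < p.1).card then 1 else -1 :=
  neg_one_pow_eq_ite

lemma wedge_smul_left (c : 𝕜) (α β : Form 𝕜 n) : wedge (c • α) β = c • wedge α β := by
  funext u
  simp only [wedge, Pi.smul_apply, smul_eq_mul, Finset.mul_sum]
  exact Finset.sum_congr rfl fun s _ => by ring

lemma wedge_smul_right (c : 𝕜) (α β : Form 𝕜 n) : wedge α (c • β) = c • wedge α β := by
  funext u
  simp only [wedge, Pi.smul_apply, smul_eq_mul, Finset.mul_sum]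
  exact Finset.sum_congr rfl fun s _ => by ring

lemma hstar_smul (c : 𝕜) (α : Form 𝕜 n) : hstar (c • α) = c • hstar α := by
  funext t
  simp only [hstar, Pi.smul_apply, smul_eq_mul, mul_left_comm]

lemma sum_wedge {ι : Type*} (S : Finset ι) (α : ι → Form 𝕜 n) (β : Form 𝕜 n) :
    wedge (∑ i ∈ S, α i) β = ∑ i ∈ S, wedge (α i) β := by
  funext u
  simp only [wedge, Finset.sum_apply, Finset.mul_sum, Finset.sum_mul]
  exact Finset.sum_comm

lemma wedge_single_apply (s : Finset (Fin n)) (c : 𝕜) (β : Form 𝕜 n) (u : Finset (Fin n)) :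
    wedge (Pi.single s c) β u = if s ⊆ u then signMerge s (u \ s) * c * β (u \ s) else 0 := by
  simp only [wedge, Pi.single_apply, mul_ite, ite_mul, mul_zero, zero_mul, Finset.sum_ite_eq',
    Finset.mem_powerset]

lemma e1_eq_single (i : Fin n) : (e1 i : Form 𝕜 n) = Pi.single {i} 1 := by
  funext s
  rw [e1, Pi.single_apply]

lemma wedge_e1_e1 {p q : Fin n} (hqp : q < p) :
    wedge (e1 p) (e1 q : Form 𝕜 n) = Pi.single {q, p} (-1) := by
  have hsign : (signMerge {p} {q} : 𝕜) = -1 := by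
    simp [signMerge, Finset.filter_singleton, hqp]
  funext u
  rw [e1_eq_single, e1_eq_single, wedge_single_apply, Pi.single_apply, Pi.single_apply]
  by_cases hu : u = {q, p}
  · have hdiff : ({q, p} : Finset (Fin n)) \ {p} = {q} := by
      rw [← Finset.insert_sdiff_cancel (Finset.notMem_singleton.mpr hqp.ne)]
    simp [hu, hdiff, hsign]
  · have hdiff : {p} ⊆ u → u \ {p} ≠ {q} := by
      rintro hp hq
      rw [← Finset.sdiff_union_of_subset hp, hq] at hu
      exact hu rfl
    simp +contextual [hu, hdiff]

end Wedge

section EvalForm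

lemma sum_evalForm {ι : Type*} (S : Finset ι) (α : ι → Form 𝕜 n) {k : ℕ}
    (v : Fin k → Fin n → 𝕜) :
    evalForm (∑ i ∈ S, α i) v = ∑ i ∈ S, evalForm (α i) v := by
  simp only [evalForm, Finset.sum_apply, Finset.sum_mul]
  exact Finset.sum_comm

lemma evalForm_single_image {k : ℕ} {g : Fin k → Fin n} (hg : StrictMono g) (c : 𝕜)
    (v : Fin k → Fin n → 𝕜) :
    evalForm (Pi.single (Finset.univ.image g) c) v =
      c * Matrix.det (Matrix.of fun i j => v i (g j)) := by
  have hcard : (Finset.univ.image g).card = k := by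
    rw [Finset.card_image_of_injective _ hg.injective, Finset.card_fin]
  have henum : ∀ j, ((Finset.univ.image g).orderIsoOfFin hcard j : Fin n) = g j := fun j => by
    rw [Finset.coe_orderIsoOfFin_apply, ← Finset.orderEmbOfFin_unique hcard (by simp) hg]
  rw [evalForm, Finset.sum_eq_single (Finset.univ.image g)]
  · simp only [Pi.single_eq_same, dif_pos hcard, henum]
  · intro s _ hs
    rw [Pi.single_eq_of_ne hs, zero_mul]
  · simp

end EvalForm

section LinearAlgebra

variable [CommRing R]

/-- The generalized cross product of the rows of `A`: the vector of its signed maximal minors. -/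
def rowCross {m : ℕ} (A : Matrix (Fin m) (Fin (m + 1)) R) (d : Fin (m + 1)) : R :=
  (-1) ^ (d : ℕ) * (A.submatrix id d.succAbove).det

lemma neg_one_pow_mul_rowCross {m : ℕ} (A : Matrix (Fin m) (Fin (m + 1)) R) (d : Fin (m + 1)) :
    (-1) ^ (d : ℕ) * rowCross A d = (A.submatrix id d.succAbove).det := by
  rw [rowCross, ← mul_assoc, ← pow_add, Even.neg_one_pow ⟨_, rfl⟩, one_mul]

lemma dotProduct_rowCross {m : ℕ} (A : Matrix (Fin m) (Fin (m + 1)) R) (j : Fin m) :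
    A j ⬝ᵥ rowCross A = 0 := by
  -- Laplace expansion of the square matrix obtained by repeating the row `A j` on top of `A`.
  let repeated : Matrix (Fin (m + 1)) (Fin (m + 1)) R := Matrix.of (Fin.cons (A j) A)
  have hdet : repeated.det = 0 :=
    Matrix.det_zero_of_row_eq (Fin.succ_ne_zero j).symm rfl
  rw [← hdet, Matrix.det_succ_row_zero]
  refine Finset.sum_congr rfl fun d _ => ?_
  rw [rowCross, mul_left_comm, ← mul_assoc]
  rfl

/-- The matrices of the three 2-forms `ω_j` on `ℝ⁴` with `φ = e^{123} + ∑ j, e^j ∧ ω_j`. -/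
def omega : Fin 3 → Matrix (Fin 4) (Fin 4) R :=
  ![!![0, 1, 0, 0; -1, 0, 0, 0; 0, 0, 0, 1; 0, 0, -1, 0],
    !![0, 0, 1, 0; 0, 0, 0, -1; -1, 0, 0, 0; 0, 1, 0, 0],
    !![0, 0, 0, -1; 0, 0, -1, 0; 0, 1, 0, 0; 1, 0, 0, 0]]

/-- The Fueter operator `∑ j, ω_j ∇f^j` as a function of the Jacobian matrix `A` of `f`. -/
def fueter (A : Matrix (Fin 3) (Fin 4) R) : Fin 4 → R :=
  ∑ j, (omega j).mulVec (A j)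

/-- The obstruction to coassociativity of a graph with Jacobian matrix `A`: its components are, up
to sign, the values of `φ` on triples of the spanning tangent vectors. -/
def coassocDefect (A : Matrix (Fin 3) (Fin 4) R) : Fin 4 → R :=
  fueter A + rowCross A

lemma dotProduct_coassocDefect (A : Matrix (Fin 3) (Fin 4) R) (j : Fin 3) :
    A j ⬝ᵥ coassocDefect A = A j ⬝ᵥ fueter A := by
  rw [coassocDefect, dotProduct_add, dotProduct_rowCross, add_zero]

lemma fueter_apply (A : Matrix (Fin 3) (Fin 4) R) :
    fueter A = ![A 0 1 + A 1 2 - A 2 3, -A 0 0 - A 1 3 - A 2 2,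
      A 0 3 - A 1 0 + A 2 1, -A 0 2 + A 1 1 + A 2 0] := by
  funext d
  simp only [fueter, omega, Matrix.mulVec, dotProduct, Finset.sum_apply, Fin.sum_univ_three,
    Fin.sum_univ_four]
  fin_cases d <;> simp <;> ring

lemma coassocDefect_map {S : Type*} [CommRing S] (A : Matrix (Fin 3) (Fin 4) R) (h : R →+* S) :
    coassocDefect (A.map h) = h ∘ coassocDefect A := by
  funext d
  have hminor : ((A.map h).submatrix id d.succAbove).det = h (A.submatrix id d.succAbove).det :=
    (h.map_det _).symm
  simp only [coassocDefect, Pi.add_apply, rowCross, hminor, Function.comp_apply, map_add, map_mul,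
    map_pow, map_neg, map_one, fueter_apply]
  fin_cases d <;> simp

end LinearAlgebra

section G2Form

/-- The increasing index triples of the monomials of `φ`. -/
def phiIndex : Fin 7 → Fin 3 → Fin 7 :=
  ![![0, 1, 2], ![0, 3, 4], ![0, 5, 6], ![1, 3, 5], ![1, 4, 6], ![2, 3, 6], ![2, 4, 5]]

/-- The coefficients of the monomials of `φ`, in the order of `phiIndex`. -/
def phiCoeff : Fin 7 → 𝕜 :=
  ![1, 1, 1, 1, -1, -1, -1]

lemma strictMono_phiIndex (i : Fin 7) : StrictMono (phiIndex i) := by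
  rw [Fin.strictMono_iff_lt_succ]
  revert i
  decide

lemma phi7_eq_sum_single :
    (phi7 : Form 𝕜 7) = ∑ i, Pi.single (Finset.univ.image (phiIndex i)) (phiCoeff i) := by
  funext s
  simp only [Finset.sum_apply, Pi.single_apply]
  by_cases hs : ∃ i, s = Finset.univ.image (phiIndex i)
  · obtain ⟨i, rfl⟩ := hs
    rw [Finset.sum_eq_single i (fun b _ hb => if_neg (by revert i b; decide)) (by simp), if_pos rfl]
    fin_cases i <;> simp (decide := true) only [phi7, if_true, if_false] <;> rfl
  · push Not at hs
    have hs' : s ≠ {0, 1, 2} ∧ s ≠ {0, 3, 4} ∧ s ≠ {0, 5, 6} ∧ s ≠ {1, 3, 5} ∧ s ≠ {1, 4, 6} ∧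
        s ≠ {2, 3, 6} ∧ s ≠ {2, 4, 5} := ⟨hs 0, hs 1, hs 2, hs 3, hs 4, hs 5, hs 6⟩
    simp [phi7, hs, hs']

lemma evalForm_phi7 (v : Fin 3 → Fin 7 → 𝕜) :
    evalForm phi7 v = ∑ i, phiCoeff i * (Matrix.of fun k l => v k (phiIndex i l)).det := by
  simp only [phi7_eq_sum_single, sum_evalForm, evalForm_single_image (strictMono_phiIndex _)]

lemma wedge_phi7_apply (β : Form 𝕜 7) (u : Finset (Fin 7)) :
    wedge phi7 β u = ∑ i, if Finset.univ.image (phiIndex i) ⊆ u then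
      signMerge (Finset.univ.image (phiIndex i)) (u \ Finset.univ.image (phiIndex i)) *
        phiCoeff i * β (u \ Finset.univ.image (phiIndex i)) else 0 := by
  simp only [phi7_eq_sum_single, sum_wedge, Finset.sum_apply, wedge_single_apply]

/-- The grading of forms on `ℝ³ × ℝ⁴` by degree and by parity under `x ↦ -x`. -/
def degreeParity (i : Fin 7) : ℤ × ZMod 2 :=
  (1, if i < 3 then 1 else 0)

lemma phi7_mem_weightSpace : (phi7 : Form 𝕜 7) ∈ weightSpace degreeParity (3, 1) := by
  rw [phi7_eq_sum_single]
  refine sum_mem fun i _ => ?_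
  have hw : ∑ k ∈ Finset.univ.image (phiIndex i), degreeParity k = (3, 1) := by
    revert i
    decide
  exact hw ▸ single_mem_weightSpace _ _ _

lemma psi7_mem_weightSpace : (psi7 : Form 𝕜 7) ∈ weightSpace degreeParity (4, 0) := by
  intro s hs
  unfold psi7
  split_ifs <;> first | rfl | (subst s; exact absurd (by decide) hs)

set_option maxRecDepth 4000 in
lemma eq_zero_iff_of_mem_weightSpace_odd [Semiring R] {α : Form R 7}
    (hα : α ∈ weightSpace degreeParity (6, 1)) : α = 0 ↔ ∀ d, α {ya d}ᶜ = 0 :=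
  eq_zero_iff_of_mem_weightSpace (by decide) hα

set_option maxRecDepth 4000 in
lemma eq_zero_iff_of_mem_weightSpace_even [Semiring R] {α : Form R 7}
    (hα : α ∈ weightSpace degreeParity (6, 0)) : α = 0 ↔ ∀ j, α {xj j}ᶜ = 0 :=
  eq_zero_iff_of_mem_weightSpace (by decide) hα

end G2Form

section Graph

/-- The tangent vectors `w_a` of a graph with Jacobian matrix `A`. -/
def graphTangent (A : Matrix (Fin 3) (Fin 4) 𝕜) (a : Fin 4) : Fin 7 → 𝕜 :=
  Pi.single (ya a) 1 + ∑ j : Fin 3, A j a • (Pi.single (xj j) 1 : Fin 7 → 𝕜)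

/-- The 2-form `γ = ∑ A_{ja} dy^a ∧ dx^j`; the curvature of a graph with Jacobian matrix `A` is
`√-1 γ`. -/
def graphForm (A : Matrix (Fin 3) (Fin 4) 𝕜) : Form 𝕜 7 :=
  ∑ j : Fin 3, ∑ a : Fin 4, A j a • wedge (e1 (ya a)) (e1 (xj j))

variable (A : Matrix (Fin 3) (Fin 4) 𝕜)

lemma graphTangent_apply (a : Fin 4) :
    graphTangent A a = Fin.append (fun j => A j a) (Pi.single a 1) := by
  funext i
  simp only [graphTangent, Fin.sum_univ_three, Pi.add_apply, Pi.smul_apply, smul_eq_mul,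
    Pi.single_apply]
  fin_cases i <;> fin_cases a <;> simp (decide := true) [Fin.append, Fin.addCases]

lemma evalForm_phi7_graphTangent (d : Fin 4) :
    evalForm phi7 ![graphTangent A (d.succAbove 0), graphTangent A (d.succAbove 1),
      graphTangent A (d.succAbove 2)] = (-1) ^ (d : ℕ) * coassocDefect A d := by
  rw [coassocDefect, Pi.add_apply, mul_add, neg_one_pow_mul_rowCross]
  simp only [evalForm_phi7, graphTangent_apply, Matrix.det_fin_three, fueter_apply,
    Fin.sum_univ_seven, phiIndex, phiCoeff, Matrix.of_apply, Matrix.submatrix_apply,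
    Matrix.cons_val]
  fin_cases d <;> simp (decide := true) [Fin.succAbove, Fin.append, Fin.addCases] <;> ring

lemma graphForm_eq_sum_single :
    graphForm A = ∑ j, ∑ a, Pi.single {xj j, ya a} (-A j a) := by
  have hlt : ∀ j a, xj j < ya a := by decide
  simp only [graphForm, wedge_e1_e1 (hlt _ _), ← Pi.single_smul, smul_eq_mul, mul_neg_one]

lemma graphForm_mem_weightSpace : graphForm A ∈ weightSpace degreeParity (2, 1) := by
  have hw : ∀ j a, ∑ i ∈ {xj j, ya a}, degreeParity i = (2, 1) := by decide
  rw [graphForm_eq_sum_single]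
  exact sum_mem fun j _ => sum_mem fun a _ => hw j a ▸ single_mem_weightSpace _ _ _

lemma wedge_graphForm_apply (β : Form 𝕜 7) (u : Finset (Fin 7)) :
    wedge (graphForm A) β u = ∑ j, ∑ a, if {xj j, ya a} ⊆ u then
      signMerge {xj j, ya a} (u \ {xj j, ya a}) * -A j a * β (u \ {xj j, ya a}) else 0 := by
  simp only [graphForm_eq_sum_single, sum_wedge, Finset.sum_apply, wedge_single_apply]

lemma graphForm_apply (s : Finset (Fin 7)) :
    graphForm A s = ∑ j, ∑ a, if s = {xj j, ya a} then -A j a else 0 := by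
  simp only [graphForm_eq_sum_single, Finset.sum_apply, Pi.single_apply]

lemma graphForm_sq_apply {j k : Fin 3} (hjk : j < k) {a b : Fin 4} (hab : a < b) :
    wedge (graphForm A) (graphForm A) {xj j, xj k, ya a, ya b} =
      -2 * (A j a * A k b - A j b * A k a) := by
  fin_cases j <;> fin_cases k <;> (try exact absurd hjk (by decide)) <;>
    fin_cases a <;> fin_cases b <;> (try exact absurd hab (by decide)) <;>
    simp (decide := true) only [wedge_graphForm_apply, graphForm_apply, signMerge_eq_ite,
      Fin.sum_univ_three, Fin.sum_univ_four, if_true, if_false, mul_zero, zero_add, add_zero,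
      Fin.zero_eta, Fin.mk_one, Fin.reduceFinMk] <;>
    ring

lemma signMerge_pair_compl (d : Fin 4) (j i : Fin 3) :
    (signMerge {xj j, ya (d.succAbove i)} ({ya d}ᶜ \ {xj j, ya (d.succAbove i)}) : 𝕜) =
      (-1) ^ (j + i : ℕ) := by
  have hcard : ((({xj j, ya (d.succAbove i)} : Finset (Fin 7)) ×ˢ
      ({ya d}ᶜ \ {xj j, ya (d.succAbove i)})).filter fun p => p.2 < p.1).card = j + i + 2 := by
    revert d j i
    decide
  rw [signMerge, hcard, pow_add, neg_one_sq, mul_one]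

lemma graphForm_cube_apply (d : Fin 4) :
    wedge (graphForm A) (wedge (graphForm A) (graphForm A)) {ya d}ᶜ =
      6 * (A.submatrix id d.succAbove).det := by
  have hrow (j : Fin 3) : (∑ a, if {xj j, ya a} ⊆ ({ya d}ᶜ : Finset (Fin 7)) then
      signMerge {xj j, ya a} ({ya d}ᶜ \ {xj j, ya a}) * -A j a *
        wedge (graphForm A) (graphForm A) ({ya d}ᶜ \ {xj j, ya a}) else 0) =
      2 * (A.submatrix id d.succAbove).det := by
    rw [Fin.sum_univ_succAbove _ d, if_neg (by simp), zero_add,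
      Matrix.det_succ_row _ j, Finset.mul_sum]
    refine Finset.sum_congr rfl fun i _ => ?_
    have hsub : {xj j, ya (d.succAbove i)} ⊆ ({ya d}ᶜ : Finset (Fin 7)) := by
      revert d j i
      decide
    have hdiff : ({ya d}ᶜ \ {xj j, ya (d.succAbove i)} : Finset (Fin 7)) =
        {xj (j.succAbove 0), xj (j.succAbove 1), ya (d.succAbove (i.succAbove 0)),
          ya (d.succAbove (i.succAbove 1))} := by
      revert d j i
      decide
    have hlt (k : Fin 3) : k.succAbove 0 < k.succAbove 1 := Fin.strictMono_succAbove k (by decide)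
    rw [if_pos hsub, signMerge_pair_compl, hdiff,
      graphForm_sq_apply A (hlt j) (Fin.strictMono_succAbove d (hlt i)), Matrix.det_fin_two]
    simp only [Matrix.submatrix_apply, id_eq]
    ring
  simp only [wedge_graphForm_apply A (wedge _ _), hrow, Fin.sum_univ_three]
  ring

lemma graphForm_wedge_psi7_apply (d : Fin 4) :
    wedge (graphForm A) psi7 {ya d}ᶜ = -((-1) ^ (d : ℕ) * fueter A d) := by
  fin_cases d <;>
    simp (decide := true) only [wedge_graphForm_apply, psi7, fueter_apply, signMerge_eq_ite,
      Fin.sum_univ_three, Fin.sum_univ_four, if_true, if_false, mul_zero, zero_add, add_zero] <;>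
    simp <;>
    ring

lemma phi7_wedge_hstar_graphForm_sq_apply (j : Fin 3) :
    wedge phi7 (hstar (wedge (graphForm A) (graphForm A))) {xj j}ᶜ =
      -2 * (-1) ^ (j : ℕ) * (A j ⬝ᵥ fueter A) := by
  fin_cases j <;>
    simp (decide := true) only [wedge_phi7_apply, hstar, phiCoeff, wedge_graphForm_apply,
      graphForm_apply, fueter_apply, dotProduct, signMerge_eq_ite, Fin.sum_univ_three,
      Fin.sum_univ_four, Fin.sum_univ_seven, Matrix.cons_val, if_true, if_false, mul_zero,
      zero_add, add_zero] <;>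
    simp <;>
    ring

/-- The left-hand side `F³/6 + F ∧ *₇φ` of the deformed Donaldson–Thomas equation. -/
def deformedDT (F : Form 𝕜 7) : Form 𝕜 7 :=
  (6 : 𝕜)⁻¹ • wedge F (wedge F F) + wedge F psi7

lemma deformedDT_mem_weightSpace {F : Form 𝕜 7} (hF : F ∈ weightSpace degreeParity (2, 1)) :
    deformedDT F ∈ weightSpace degreeParity (6, 1) :=
  add_mem
    (Submodule.smul_mem _ _ (wedge_mem_weightSpace hF (wedge_mem_weightSpace hF hF)))
    (wedge_mem_weightSpace hF psi7_mem_weightSpace)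

lemma phi7_wedge_hstar_sq_mem_weightSpace {F : Form 𝕜 7}
    (hF : F ∈ weightSpace degreeParity (2, 1)) :
    wedge phi7 (hstar (wedge F F)) ∈ weightSpace degreeParity (6, 0) :=
  wedge_mem_weightSpace phi7_mem_weightSpace (hstar_mem_weightSpace (wedge_mem_weightSpace hF hF))

lemma forall_lt_lt_iff_forall_succAbove {p : Fin 4 → Fin 4 → Fin 4 → Prop} :
    (∀ a b c, a < b → b < c → p a b c) ↔
      ∀ d : Fin 4, p (d.succAbove 0) (d.succAbove 1) (d.succAbove 2) := by
  constructor
  · intro h d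
    exact h _ _ _ (Fin.strictMono_succAbove d (by decide)) (Fin.strictMono_succAbove d (by decide))
  · intro h a b c hab hbc
    have homit : ∀ a b c : Fin 4, a < b → b < c →
        ∃ d : Fin 4, d.succAbove 0 = a ∧ d.succAbove 1 = b ∧ d.succAbove 2 = c := by decide
    obtain ⟨d, rfl, rfl, rfl⟩ := homit a b c hab hbc
    exact h d

lemma forall_evalForm_phi7_eq_zero_iff :
    (∀ a b c : Fin 4, a < b → b < c →
      evalForm phi7 ![graphTangent A a, graphTangent A b, graphTangent A c] = 0) ↔
      coassocDefect A = 0 := by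
  simp only [forall_lt_lt_iff_forall_succAbove, evalForm_phi7_graphTangent, mul_eq_zero,
    pow_eq_zero_iff', neg_eq_zero, one_ne_zero, false_and, false_or, funext_iff, Pi.zero_apply]

lemma deformedDT_smul_graphForm_apply [CharZero 𝕜] {c : 𝕜} (hc : c ^ 2 = -1) (d : Fin 4) :
    deformedDT (c • graphForm A) {ya d}ᶜ = -c * (-1) ^ (d : ℕ) * coassocDefect A d := by
  have hc3 : c * c * c = -c := by linear_combination c * hc
  simp only [deformedDT, wedge_smul_left, wedge_smul_right, Pi.add_apply, Pi.smul_apply,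
    smul_eq_mul, graphForm_cube_apply, graphForm_wedge_psi7_apply, ← neg_one_pow_mul_rowCross,
    coassocDefect]
  linear_combination (-1) ^ (d : ℕ) * rowCross A d * hc3

lemma deformedDT_smul_graphForm_eq_zero_iff [CharZero 𝕜] {c : 𝕜} (hc : c ^ 2 = -1) :
    deformedDT (c • graphForm A) = 0 ↔ coassocDefect A = 0 := by
  have hc0 : c ≠ 0 := by
    rintro rfl
    simp at hc
  rw [eq_zero_iff_of_mem_weightSpace_odd
    (deformedDT_mem_weightSpace (Submodule.smul_mem _ c (graphForm_mem_weightSpace A)))]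
  simp [deformedDT_smul_graphForm_apply A hc, hc0, funext_iff]

lemma phi7_wedge_hstar_sq_smul_graphForm_apply {c : 𝕜} (hc : c ^ 2 = -1) (j : Fin 3) :
    wedge phi7 (hstar (wedge (c • graphForm A) (c • graphForm A))) {xj j}ᶜ =
      2 * (-1) ^ (j : ℕ) * (A j ⬝ᵥ coassocDefect A) := by
  simp only [wedge_smul_left, wedge_smul_right, hstar_smul, Pi.smul_apply, smul_eq_mul,
    phi7_wedge_hstar_graphForm_sq_apply, dotProduct_coassocDefect]
  linear_combination -2 * (-1) ^ (j : ℕ) * (A j ⬝ᵥ fueter A) * hc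

lemma phi7_wedge_hstar_sq_smul_graphForm_eq_zero {c : 𝕜} (hc : c ^ 2 = -1)
    (hA : coassocDefect A = 0) :
    wedge phi7 (hstar (wedge (c • graphForm A) (c • graphForm A))) = 0 := by
  rw [eq_zero_iff_of_mem_weightSpace_even (phi7_wedge_hstar_sq_mem_weightSpace
    (Submodule.smul_mem _ c (graphForm_mem_weightSpace A)))]
  intro j
  rw [phi7_wedge_hstar_sq_smul_graphForm_apply A hc, hA, dotProduct_zero, mul_zero]

end Graph

/-- The curvature `√-1 γ` of the Fourier–Mukai transform of a graph with Jacobian matrix `A`. -/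
def graphCurvature (A : Matrix (Fin 3) (Fin 4) ℝ) : Form ℂ 7 :=
  fun s => Complex.I * ((graphForm A s : ℝ) : ℂ)

lemma graphCurvature_eq_smul (A : Matrix (Fin 3) (Fin 4) ℝ) :
    graphCurvature A = Complex.I • graphForm (A.map Complex.ofRealHom) := by
  funext s
  simp [graphCurvature, graphForm_apply, apply_ite Complex.ofReal]

theorem statement13_general (A : Matrix (Fin 3) (Fin 4) ℝ) :
    List.TFAE [
      ∀ a b c : Fin 4, a < b → b < c →
        evalForm phi7 ![graphTangent A a, graphTangent A b, graphTangent A c] = 0,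
      deformedDT (graphCurvature A) = 0,
      deformedDT (graphCurvature A) = 0 ∧
        wedge phi7 (hstar (wedge (graphCurvature A) (graphCurvature A))) = 0] := by
  have hcomplex : coassocDefect (A.map Complex.ofRealHom) = 0 ↔ coassocDefect A = 0 := by
    simp [coassocDefect_map, funext_iff]
  rw [forall_evalForm_phi7_eq_zero_iff, graphCurvature_eq_smul,
    deformedDT_smul_graphForm_eq_zero_iff _ Complex.I_sq, hcomplex]
  tfae_have 1 ↔ 2 := Iff.rfl
  tfae_have 2 → 3 := fun hA => ⟨hA,
    phi7_wedge_hstar_sq_smul_graphForm_eq_zero _ Complex.I_sq (hcomplex.mpr hA)⟩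
  tfae_have 3 → 2 := And.left
  tfae_finish

/-- The Jacobian matrix `(∂f^j/∂y^a)` of `f` at `y`. -/
def jacobian (f : (Fin 4 → ℝ) → (Fin 3 → ℝ)) (y : Fin 4 → ℝ) : Matrix (Fin 3) (Fin 4) ℝ :=
  Matrix.of fun j a => pd f y a j

/-- Proposition 6.1.  The following are equivalent:
(1) the graph `S` is coassociative with an appropriate orientation
    (the restriction of `φ` to the tangent spaces of `S` vanishes);
(2) `(F_∇^S)³/6 + F_∇^S ∧ *₇φ = 0` on `B`;
(3) `(F_∇^S)³/6 + F_∇^S ∧ *₇φ = 0` and `φ ∧ *₇((F_∇^S)²) = 0` on `B`. -/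
theorem statement13 (B : Set (Fin 4 → ℝ)) (hB : IsOpen B)
    (f : (Fin 4 → ℝ) → (Fin 3 → ℝ)) (hf : ContDiffOn ℝ (⊤ : ℕ∞) f B) :
    ((∀ y ∈ B, ∀ a b c : Fin 4, a < b → b < c →
        evalForm phi7 ![wC f y a, wC f y b, wC f y c] = 0) ↔
      (∀ y ∈ B,
        (6 : ℂ)⁻¹ • wedge (FSC f y) (wedge (FSC f y) (FSC f y)) +
          wedge (FSC f y) psi7 = 0)) ∧
    ((∀ y ∈ B, ∀ a b c : Fin 4, a < b → b < c →
        evalForm phi7 ![wC f y a, wC f y b, wC f y c] = 0) ↔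
      (∀ y ∈ B,
        ((6 : ℂ)⁻¹ • wedge (FSC f y) (wedge (FSC f y) (FSC f y)) +
          wedge (FSC f y) psi7 = 0) ∧
        wedge phi7 (hstar (wedge (FSC f y) (FSC f y))) = 0)) :=
  ⟨forall₂_congr fun y _ => (statement13_general (jacobian f y)).out 0 1,
    forall₂_congr fun y _ => (statement13_general (jacobian f y)).out 0 2⟩

end FMpaper
end
end
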